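/- arXiv:0805.2784 — 2 statements merged into one kernel-verified Lean document; each statement's English description precedes it below -/
import Mathlib

section
/- Let u : ℝ³ → ℝ³ be a smooth, compactly supported (or Schwartz) divergence-free vector field and let 3 < p ≤ ∞. Then the trilinear terms arising from the second-order energy estimate satisfy | -2∫_{ℝ³} ∇²u · (∇u · ∇∇u) dx - ∫_{ℝ³} ∇²u ∇²u · ∇u dx | ≤ 5 ‖u‖_{L^p} ‖∇²u‖_{L^{2p/(p-2)}} ‖∇³u‖_{L²}, where the left-hand side integrals are sums over all component and derivative indices. -/
open MeasureTheory Real ENNReal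

/-- `ℝ³` as a Euclidean space. -/
noncomputable abbrev E3 : Type := EuclideanSpace ℝ (Fin 3)

/-- The spatial partial derivative `∂ᵢ f` of a function `f : ℝ³ → F`. -/
noncomputable def pdv {F : Type*} [NormedAddCommGroup F] [NormedSpace ℝ F]
    (i : Fin 3) (f : E3 → F) : E3 → F :=
  fun x => fderiv ℝ f x (EuclideanSpace.single i 1)

/-- The pointwise (ℓ²) norm of the collection `∇²u` of all second-order
partial derivatives of the components of `u`. -/
noncomputable def grad2Norm (u : E3 → E3) (x : E3) : ℝ :=
  Real.sqrt (∑ i, ∑ j, ∑ k, (pdv i (pdv j u) x k) ^ 2)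

/-- The pointwise (ℓ²) norm of the collection `∇³u` of all third-order
partial derivatives of the components of `u`. -/
noncomputable def grad3Norm (u : E3 → E3) (x : E3) : ℝ :=
  Real.sqrt (∑ i, ∑ j, ∑ l, ∑ k, (pdv i (pdv j (pdv l u)) x k) ^ 2)

/-- The Lebesgue exponent `2p/(p-2)`, interpreted as `2` when `p = ∞`. -/
noncomputable def expA (p : ℝ≥0∞) : ℝ≥0∞ :=
  if p = ⊤ then 2 else 2 * p / (p - 2)


lemma pdv_contDiff {F : Type*} [NormedAddCommGroup F] [NormedSpace ℝ F] {f : E3 → F}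
    (hf : ContDiff ℝ (⊤ : ℕ∞) f) (i : Fin 3) : ContDiff ℝ (⊤ : ℕ∞) (pdv i f) := by
  unfold pdv
  exact (hf.fderiv_right (m := ((⊤ : ℕ∞) : WithTop ℕ∞)) (by simp)).clm_apply contDiff_const

lemma pdv_supp {F : Type*} [NormedAddCommGroup F] [NormedSpace ℝ F] {f : E3 → F}
    (hf : HasCompactSupport f) (i : Fin 3) : HasCompactSupport (pdv i f) :=
  hf.fderiv_apply ℝ _

lemma pdv_comp {v : E3 → E3} (hv : ContDiff ℝ (⊤ : ℕ∞) v) (i k : Fin 3) (x : E3) :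
    pdv i v x k = pdv i (fun y => v y k) x := by
  have hd : DifferentiableAt ℝ v x := (hv.differentiable (by simp)) x
  have h := ((EuclideanSpace.proj k : EuclideanSpace ℝ (Fin 3) →L[ℝ] ℝ).hasFDerivAt
    (x := v x)).comp x hd.hasFDerivAt
  have h2 : fderiv ℝ (fun y => v y k) x = _ := h.fderiv
  unfold pdv
  rw [h2]
  rfl

def SS (f : E3 → ℝ) : Prop := ContDiff ℝ (⊤ : ℕ∞) f ∧ HasCompactSupport f

lemma SS.pdv {f : E3 → ℝ} (hf : SS f) (i : Fin 3) : SS (pdv i f) :=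
  ⟨pdv_contDiff hf.1 i, pdv_supp hf.2 i⟩

lemma SS.mul {f g : E3 → ℝ} (hf : SS f) (hg : SS g) : SS (fun x => f x * g x) :=
  ⟨hf.1.mul hg.1, hf.2.mul_right⟩

lemma SS.int {f : E3 → ℝ} (hf : SS f) : Integrable f :=
  hf.1.continuous.integrable_of_hasCompactSupport hf.2

lemma SS.diff {f : E3 → ℝ} (hf : SS f) : Differentiable ℝ f :=
  hf.1.differentiable (by simp)

lemma pdv_mul {f g : E3 → ℝ} (hf : SS f) (hg : SS g) (i : Fin 3) (x : E3) :
    pdv i (fun x => f x * g x) x = pdv i f x * g x + f x * pdv i g x := by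
  unfold pdv
  rw [fderiv_fun_mul (hf.diff x) (hg.diff x)]
  simp
  ring

lemma pdv_symm {f : E3 → ℝ} (hf : SS f) (i j : Fin 3) : pdv i (pdv j f) = pdv j (pdv i f) := by
  have key : ∀ i j x, pdv i (pdv j f) x =
      fderiv ℝ (fderiv ℝ f) x (EuclideanSpace.single i 1) (EuclideanSpace.single j 1) := by
    intro i j x
    have h1 : DifferentiableAt ℝ (fderiv ℝ f) x :=
      ((hf.1.fderiv_right (m := ((⊤ : ℕ∞) : WithTop ℕ∞)) (by simp)).differentiable (by simp)) x
    show fderiv ℝ (fun y => fderiv ℝ f y (EuclideanSpace.single j 1)) x _ = _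
    rw [fderiv_clm_apply h1 (by fun_prop)]
    simp
  ext x
  rw [key, key]
  exact (hf.1.contDiffAt.isSymmSndFDerivAt (by simp; exact WithTop.coe_le_coe.2 le_top)) _ _

lemma ibp {f g h : E3 → ℝ} (hf : SS f) (hg : SS g) (hh : SS h) (i : Fin 3) :
    ∫ x, f x * pdv i g x * h x =
      - (∫ x, g x * pdv i f x * h x) - ∫ x, g x * f x * pdv i h x := by
  have hfh := hf.mul hh
  have h0 := integral_mul_fderiv_eq_neg_fderiv_mul_of_integrable (μ := (volume : Measure E3))
    (f := fun x => f x * h x) (g := g) (v := EuclideanSpace.single i 1)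
    ((hfh.pdv i).mul hg).int (hfh.mul (hg.pdv i)).int (hfh.mul hg).int
    (fun x _ => hfh.diff x) (fun x _ => hg.diff x)
  have e1 : ∫ x, f x * pdv i g x * h x =
      ∫ x, f x * h x * fderiv ℝ g x (EuclideanSpace.single i 1) := by
    congr 1; ext x; simp only [pdv]; ring
  rw [e1, h0]
  have e2 : ∫ x, fderiv ℝ (fun x => f x * h x) x (EuclideanSpace.single i 1) * g x =
      ∫ x, (g x * pdv i f x * h x + g x * f x * pdv i h x) := by
    congr 1; ext x
    have := pdv_mul hf hh i x
    unfold pdv at this ⊢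
    rw [this]; ring
  rw [e2, integral_add ((hg.mul (hf.pdv i)).mul hh).int ((hg.mul hf).mul (hh.pdv i)).int]
  ring

lemma transport_zero {U : Fin 3 → E3 → ℝ} (hU : ∀ k, SS (U k))
    (hdiv : ∀ x, ∑ i, pdv i (U i) x = 0) {F : E3 → ℝ} (hF : SS F) :
    ∑ l, ∫ x, U l x * F x * pdv l F x = 0 := by
  have h1 : ∀ l, ∫ x, F x * pdv l (U l) x * F x = -2 * ∫ x, U l x * F x * pdv l F x := by
    intro l
    rw [ibp hF (hU l) hF l]
    have : ∫ x, U l x * pdv l F x * F x = ∫ x, U l x * F x * pdv l F x := by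
      congr 1; ext x; ring
    rw [this]; ring
  have h2 : ∑ l, ∫ x, F x * pdv l (U l) x * F x = 0 := by
    rw [← integral_finsetSum _ (fun l _ => ((hF.mul ((hU l).pdv l)).mul hF).int)]
    have : ∀ x, ∑ l, F x * pdv l (U l) x * F x = 0 := by
      intro x
      rw [← Finset.sum_mul, ← Finset.mul_sum, hdiv]; simp
    simp [this]
  simp only [h1] at h2
  rw [← Finset.mul_sum] at h2
  linarith

lemma termA {U : Fin 3 → E3 → ℝ} (hU : ∀ k, SS (U k))
    (hdiv : ∀ x, ∑ i, pdv i (U i) x = 0) :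
    (∑ i, ∑ j, ∑ k, ∑ l, ∫ x, pdv i (pdv j (U k)) x * pdv i (U l) x * pdv l (pdv j (U k)) x) =
    - ∑ i, ∑ j, ∑ k, ∑ l, ∫ x, U l x * pdv i (pdv i (pdv j (U k))) x * pdv l (pdv j (U k)) x := by
  simp only [← Finset.sum_neg_distrib]
  refine Finset.sum_congr rfl fun i _ => Finset.sum_congr rfl fun j _ =>
    Finset.sum_congr rfl fun k _ => ?_
  have hj := (hU k).pdv j
  have h := transport_zero hU hdiv (hj.pdv i)
  rw [← sub_zero (∑ l, -_), ← h, ← Finset.sum_sub_distrib]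
  refine Finset.sum_congr rfl fun l _ => ?_
  rw [ibp (hj.pdv i) (hU l) (hj.pdv l) i, pdv_symm hj i l]

lemma pdv_zero' (i : Fin 3) : pdv i (fun _ : E3 => (0 : ℝ)) = fun _ => 0 := by
  ext x; simp [pdv]

lemma pdv_sum {G : Fin 3 → E3 → ℝ} (hG : ∀ l, SS (G l)) (i : Fin 3) (x : E3) :
    pdv i (fun y => ∑ l, G l y) x = ∑ l, pdv i (G l) x := by
  unfold pdv
  rw [fderiv_fun_sum (fun l _ => (hG l).diff x)]
  simp

lemma termB {U : Fin 3 → E3 → ℝ} (hU : ∀ k, SS (U k))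
    (hdiv : ∀ x, ∑ i, pdv i (U i) x = 0) :
    (∑ i, ∑ j, ∑ k, ∑ l, ∫ x, pdv i (pdv j (U k)) x * pdv i (pdv j (U l)) x * pdv l (U k) x) =
    - ∑ i, ∑ j, ∑ k, ∑ l, ∫ x, U k x * pdv l (pdv i (pdv j (U k))) x * pdv i (pdv j (U l)) x := by
  simp only [← Finset.sum_neg_distrib]
  refine Finset.sum_congr rfl fun i _ => Finset.sum_congr rfl fun j _ =>
    Finset.sum_congr rfl fun k _ => ?_
  have hS : ∀ k, SS (pdv i (pdv j (U k))) := fun k => ((hU k).pdv j).pdv i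
  have hd : ∀ x, ∑ l, pdv l (pdv i (pdv j (U l))) x = 0 := by
    intro x
    have e : ∀ l, pdv l (pdv i (pdv j (U l))) = pdv i (pdv j (pdv l (U l))) := by
      intro l
      rw [pdv_symm ((hU l).pdv j) l i, pdv_symm (hU l) l j]
    simp only [e]
    rw [← pdv_sum (fun l => (((hU l).pdv l).pdv j))]
    have e2 : (fun y => ∑ l, pdv j (pdv l (U l)) y) = fun _ => 0 := by
      ext y
      rw [← pdv_sum (fun l => ((hU l).pdv l))]
      simp only [hdiv, pdv_zero']
    rw [e2, pdv_zero']
  have h : ∑ l, ∫ x, U k x * pdv i (pdv j (U k)) x * pdv l (pdv i (pdv j (U l))) x = 0 := by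
    rw [← integral_finsetSum _
      (fun l _ => (((hU k).mul (hS k)).mul ((hS l).pdv l)).int)]
    have : ∀ x, ∑ l, U k x * pdv i (pdv j (U k)) x * pdv l (pdv i (pdv j (U l))) x = 0 := by
      intro x
      rw [← Finset.mul_sum, hd]; simp
    simp [this]
  rw [← sub_zero (∑ l, -_), ← h, ← Finset.sum_sub_distrib]
  refine Finset.sum_congr rfl fun l _ => ?_
  rw [← ibp (hS k) (hU k) (hS l) l]
  congr 1; ext x; ring

lemma ptA (u : Fin 3 → ℝ) (a : Fin 3 → Fin 3 → Fin 3 → ℝ)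
    (T : Fin 3 → Fin 3 → Fin 3 → Fin 3 → ℝ) :
    (∑ i, ∑ j, ∑ k, ∑ l, u l * T i i j k * a l j k) ^ 2 ≤
      3 * ((∑ l, u l ^ 2) * (∑ i, ∑ j, ∑ k, a i j k ^ 2) *
        (∑ i, ∑ j, ∑ l, ∑ k, T i j l k ^ 2)) := by
  have cs := Finset.sum_mul_sq_le_sq_mul_sq (Finset.univ : Finset (Fin 3 × Fin 3 × Fin 3))
    (fun q => ∑ l, u l * a l q.2.1 q.2.2) (fun q => T q.1 q.1 q.2.1 q.2.2)
  simp only [Fintype.sum_prod_type] at cs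
  have e : (∑ i, ∑ j, ∑ k, ∑ l, u l * T i i j k * a l j k) =
      ∑ i, ∑ j, ∑ k, (∑ l, u l * a l j k) * T i i j k := by
    refine Finset.sum_congr rfl fun i _ => Finset.sum_congr rfl fun j _ =>
      Finset.sum_congr rfl fun k _ => ?_
    rw [Finset.sum_mul]
    exact Finset.sum_congr rfl fun l _ => by ring
  rw [e]
  refine cs.trans ?_
  have h1 : ∑ i : Fin 3, ∑ j, ∑ k, (∑ l, u l * a l j k) ^ 2 ≤
      3 * ((∑ l, u l ^ 2) * (∑ i, ∑ j, ∑ k, a i j k ^ 2)) := by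
    rw [Finset.sum_const, Finset.card_univ, Fintype.card_fin, nsmul_eq_mul]
    push_cast
    refine mul_le_mul_of_nonneg_left ?_ (by norm_num)
    have : (∑ l, u l ^ 2) * (∑ i, ∑ j, ∑ k, a i j k ^ 2) =
        ∑ j, ∑ k, (∑ l, u l ^ 2) * ∑ l, a l j k ^ 2 := by
      simp only [← Finset.mul_sum]
      congr 1
      rw [Finset.sum_comm]
      exact Finset.sum_congr rfl fun j _ => Finset.sum_comm
    rw [this]
    exact Finset.sum_le_sum fun j _ => Finset.sum_le_sum fun k _ =>
      Finset.sum_mul_sq_le_sq_mul_sq _ _ _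
  have h2 : ∑ i, ∑ j, ∑ k, T i i j k ^ 2 ≤ ∑ i, ∑ j, ∑ l, ∑ k, T i j l k ^ 2 := by
    refine Finset.sum_le_sum fun i _ => ?_
    exact Finset.single_le_sum (f := fun j => ∑ l, ∑ k, T i j l k ^ 2)
      (fun j _ => by positivity) (Finset.mem_univ i)
  calc _ ≤ (3 * ((∑ l, u l ^ 2) * (∑ i, ∑ j, ∑ k, a i j k ^ 2))) *
        (∑ i, ∑ j, ∑ l, ∑ k, T i j l k ^ 2) := by
        apply mul_le_mul h1 h2 <;> positivity
    _ = _ := by ring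

lemma ptB (u : Fin 3 → ℝ) (a : Fin 3 → Fin 3 → Fin 3 → ℝ)
    (T : Fin 3 → Fin 3 → Fin 3 → Fin 3 → ℝ) :
    (∑ i, ∑ j, ∑ k, ∑ l, u k * T l i j k * a i j l) ^ 2 ≤
      ((∑ l, u l ^ 2) * (∑ i, ∑ j, ∑ k, a i j k ^ 2) *
        (∑ i, ∑ j, ∑ l, ∑ k, T i j l k ^ 2)) := by
  have cs := Finset.sum_mul_sq_le_sq_mul_sq (Finset.univ : Finset (Fin 3 × Fin 3 × Fin 3 × Fin 3))
    (fun q => u q.2.2.1 * a q.1 q.2.1 q.2.2.2) (fun q => T q.2.2.2 q.1 q.2.1 q.2.2.1)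
  simp only [Fintype.sum_prod_type] at cs
  have e1 : (∑ i, ∑ j, ∑ k, ∑ l, u k * T l i j k * a i j l) =
      ∑ i, ∑ j, ∑ k, ∑ l, u k * a i j l * T l i j k :=
    Finset.sum_congr rfl fun i _ => Finset.sum_congr rfl fun j _ =>
      Finset.sum_congr rfl fun k _ => Finset.sum_congr rfl fun l _ => by ring
  have e2 : (∑ l, u l ^ 2) * (∑ i, ∑ j, ∑ k, a i j k ^ 2) =
      ∑ i, ∑ j, ∑ k, ∑ l, (u k * a i j l) ^ 2 := by
    simp only [mul_pow, ← Finset.mul_sum, ← Finset.sum_mul]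
  have e3 : (∑ i, ∑ j, ∑ l, ∑ k, T i j l k ^ 2) =
      ∑ i, ∑ j, ∑ k, ∑ l, T l i j k ^ 2 := by
    rw [Finset.sum_comm]
    refine Finset.sum_congr rfl fun i _ => ?_
    rw [Finset.sum_comm]
    refine Finset.sum_congr rfl fun j _ => ?_
    rw [Finset.sum_comm]
  rw [e1, e2, e3]
  exact cs

lemma pt_aux (X Y M : ℝ) (hM0 : 0 ≤ M) (hA : X ^ 2 ≤ 3 * M) (hB : Y ^ 2 ≤ M) :
    |2 * X + Y| ≤ 5 * √M := by
  have hs := Real.sq_sqrt hM0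
  have hs0 := Real.sqrt_nonneg M
  have hX : |X| ≤ (7 / 4) * √M := abs_le_of_sq_le_sq (by nlinarith) (by positivity)
  have hY : |Y| ≤ √M := abs_le_of_sq_le_sq (by nlinarith) (by positivity)
  rw [abs_le] at *
  constructor <;> linarith

lemma pt (u : Fin 3 → ℝ) (a : Fin 3 → Fin 3 → Fin 3 → ℝ)
    (T : Fin 3 → Fin 3 → Fin 3 → Fin 3 → ℝ) :
    |2 * (∑ i, ∑ j, ∑ k, ∑ l, u l * T i i j k * a l j k)
      + ∑ i, ∑ j, ∑ k, ∑ l, u k * T l i j k * a i j l| ≤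
      5 * (√(∑ l, u l ^ 2) * √(∑ i, ∑ j, ∑ k, a i j k ^ 2) *
        √(∑ i, ∑ j, ∑ l, ∑ k, T i j l k ^ 2)) := by
  have hA := ptA u a T
  have hB := ptB u a T
  have h1 : 0 ≤ ∑ l, u l ^ 2 := Finset.sum_nonneg fun _ _ => sq_nonneg _
  have h2 : 0 ≤ ∑ i, ∑ j, ∑ k, a i j k ^ 2 := Finset.sum_nonneg fun _ _ =>
    Finset.sum_nonneg fun _ _ => Finset.sum_nonneg fun _ _ => sq_nonneg _
  have h3 : 0 ≤ ∑ i, ∑ j, ∑ l, ∑ k, T i j l k ^ 2 := Finset.sum_nonneg fun _ _ =>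
    Finset.sum_nonneg fun _ _ => Finset.sum_nonneg fun _ _ =>
    Finset.sum_nonneg fun _ _ => sq_nonneg _
  rw [← Real.sqrt_mul h1, ← Real.sqrt_mul (mul_nonneg h1 h2)]
  have h4 := mul_nonneg (mul_nonneg h1 h2) h3
  exact pt_aux _ _ _ h4 hA hB

lemma holder_expA (p : ℝ≥0∞) (hp : 3 < p) : HolderTriple p (expA p) 2 := by
  constructor
  unfold expA
  split_ifs with h
  · simp [h]
  · lift p to NNReal using h
    have hp' : (3 : NNReal) < p := by exact_mod_cast hp
    have h2 : (2 : NNReal) < p := lt_trans (by norm_num) hp'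
    have hsub : ((p : ℝ≥0∞) - 2) = ((p - 2 : NNReal) : ℝ≥0∞) := by norm_cast
    have hpos : (0 : NNReal) < p - 2 := tsub_pos_of_lt h2
    have hp0 : p ≠ 0 := (lt_trans (by norm_num) hp').ne'
    rw [hsub]
    have : (2 : ℝ≥0∞) = ((2 : NNReal) : ℝ≥0∞) := rfl
    rw [this, ← ENNReal.coe_mul, ← ENNReal.coe_div hpos.ne', ← ENNReal.coe_inv hp0,
      ← ENNReal.coe_inv (by positivity), ← ENNReal.coe_inv (by norm_num), ← ENNReal.coe_add]
    congr 1
    have hc : ((p - 2 : NNReal) : ℝ) = p - 2 := by rw [NNReal.coe_sub h2.le]; rfl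
    apply NNReal.eq
    push_cast
    rw [hc]
    have : (p : ℝ) ≠ 0 := by exact_mod_cast hp0
    have : (p : ℝ) - 2 ≠ 0 := by rw [← hc]; exact_mod_cast hpos.ne'
    field_simp
    ring

lemma holder3 {f g h : E3 → ℝ} (p q : ℝ≥0∞) [HolderTriple p q 2]
    (hf : MemLp f p) (hg : MemLp g q) (hh : MemLp h 2) :
    ∫ x, ‖f x * g x * h x‖ ≤
      (eLpNorm f p volume).toReal * (eLpNorm g q volume).toReal * (eLpNorm h 2 volume).toReal := by
  have h1 : eLpNorm (f • g) 2 volume ≤ eLpNorm f p volume * eLpNorm g q volume :=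
    eLpNorm_smul_le_mul_eLpNorm hg.1 hf.1
  have h2 : eLpNorm ((f • g) • h) 1 volume ≤ eLpNorm (f • g) 2 volume * eLpNorm h 2 volume :=
    eLpNorm_smul_le_mul_eLpNorm hh.1 (hf.1.smul hg.1)
  have h3 := h2.trans (mul_le_mul_left h1 _)
  have h4 := ENNReal.toReal_mono (ENNReal.mul_ne_top (ENNReal.mul_ne_top hf.2.ne hg.2.ne) hh.2.ne) h3
  rw [ENNReal.toReal_mul, ENNReal.toReal_mul] at h4
  refine le_trans (le_of_eq ?_) h4
  rw [eLpNorm_one_eq_lintegral_enorm]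
  exact integral_norm_eq_lintegral_enorm ((hf.1.mul hg.1).mul hh.1)

/-- **The trilinear estimate from the second-order energy estimate.**
For a smooth, compactly supported, divergence-free vector field `u` on `ℝ³` and
`3 < p ≤ ∞`, the trilinear terms satisfy
`| -2∫ ∇²u (∇u·∇∇u) dx - ∫ ∇²u ∇²u·∇u dx |
   ≤ 5 ‖u‖_{L^p} ‖∇²u‖_{L^{2p/(p-2)}} ‖∇³u‖_{L²}`,
the integrals on the left being sums over all component and derivative indices. -/
theorem trilinear_estimate
    (u : E3 → E3)
    (hsmooth : ContDiff ℝ (⊤ : ℕ∞) u)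
    (hsupp : HasCompactSupport u)
    (hdiv : ∀ x : E3, ∑ i, pdv i u x i = 0)
    (p : ℝ≥0∞) (hp : 3 < p) :
    |(-2 : ℝ) * (∑ i, ∑ j, ∑ k, ∑ l,
        ∫ x : E3, (pdv i (pdv j u) x k) * (pdv i u x l) * (pdv l (pdv j u) x k))
      - (∑ i, ∑ j, ∑ k, ∑ l,
        ∫ x : E3, (pdv i (pdv j u) x k) * (pdv i (pdv j u) x l) * (pdv l u x k))|
    ≤ 5 * (eLpNorm u p volume).toReal * (eLpNorm (grad2Norm u) (expA p) volume).toReal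
        * (eLpNorm (grad3Norm u) 2 volume).toReal := by
  have := holder_expA p hp
  set U : Fin 3 → E3 → ℝ := fun k x => u x k with hUdef
  have hU : ∀ k, SS (U k) := fun k => ⟨by
    exact (EuclideanSpace.proj k : EuclideanSpace ℝ (Fin 3) →L[ℝ] ℝ).contDiff.comp hsmooth,
    hsupp.comp_left (g := fun v : E3 => v k) (by simp)⟩
  have c1 : ∀ i k x, pdv i u x k = pdv i (U k) x := fun i k x => pdv_comp hsmooth i k x
  have c2 : ∀ i j k x, pdv i (pdv j u) x k = pdv i (pdv j (U k)) x := by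
    intro i j k x
    rw [pdv_comp (pdv_contDiff hsmooth j)]
    simp only [c1]
  have c3 : ∀ i j l k x, pdv i (pdv j (pdv l u)) x k = pdv i (pdv j (pdv l (U k))) x := by
    intro i j l k x
    rw [pdv_comp (pdv_contDiff (pdv_contDiff hsmooth l) j)]
    simp only [c2]
  have hdiv' : ∀ x, ∑ i, pdv i (U i) x = 0 := by
    intro x; simpa only [c1] using hdiv x
  have g2c : Continuous (grad2Norm u) := by
    unfold grad2Norm
    simp only [c2]
    refine Real.continuous_sqrt.comp ?_
    refine continuous_finsetSum _ fun i _ => continuous_finsetSum _ fun j _ =>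
      continuous_finsetSum _ fun k _ => ?_
    exact (((hU k).pdv j).pdv i).1.continuous.pow 2
  have g3c : Continuous (grad3Norm u) := by
    unfold grad3Norm
    simp only [c3]
    refine Real.continuous_sqrt.comp ?_
    refine continuous_finsetSum _ fun i _ => continuous_finsetSum _ fun j _ =>
      continuous_finsetSum _ fun l _ => continuous_finsetSum _ fun k _ => ?_
    exact ((((hU k).pdv l).pdv j).pdv i).1.continuous.pow 2
  have zs : ∀ {F : Type} [NormedAddCommGroup F] [NormedSpace ℝ F] (f : E3 → F) (i : Fin 3),
      tsupport (pdv i f) ⊆ tsupport f := by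
    intro F _ _ f i
    exact tsupport_fderiv_apply_subset ℝ _
  have g2s : HasCompactSupport (grad2Norm u) := by
    refine HasCompactSupport.intro hsupp fun x hx => ?_
    have : ∀ i j, pdv i (pdv j u) x = 0 := fun i j =>
      image_eq_zero_of_notMem_tsupport fun h => hx (zs _ _ (zs _ _ h))
    simp [grad2Norm, this]
  have g3s : HasCompactSupport (grad3Norm u) := by
    refine HasCompactSupport.intro hsupp fun x hx => ?_
    have : ∀ i j l, pdv i (pdv j (pdv l u)) x = 0 := fun i j l =>
      image_eq_zero_of_notMem_tsupport fun h => hx (zs _ _ (zs _ _ (zs _ _ h)))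
    simp [grad3Norm, this]
  have hnc : Continuous (fun x => ‖u x‖) := hsmooth.continuous.norm
  have hns : HasCompactSupport (fun x => ‖u x‖) := hsupp.norm
  have hH := holder3 p (expA p) (hnc.memLp_of_hasCompactSupport (p := p) (μ := volume) hns)
    (g2c.memLp_of_hasCompactSupport (p := expA p) (μ := volume) g2s)
    (g3c.memLp_of_hasCompactSupport (p := 2) (μ := volume) g3s)
  rw [eLpNorm_norm] at hH
  simp only [c1, c2]
  rw [termA hU hdiv', termB hU hdiv']
  have iA : ∀ i j k l, Integrable (fun x => U l x * pdv i (pdv i (pdv j (U k))) x *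
      pdv l (pdv j (U k)) x) := fun i j k l =>
    (((hU l).mul ((((hU k).pdv j).pdv i).pdv i)).mul (((hU k).pdv j).pdv l)).int
  have iB : ∀ i j k l, Integrable (fun x => U k x * pdv l (pdv i (pdv j (U k))) x *
      pdv i (pdv j (U l)) x) := fun i j k l =>
    (((hU k).mul ((((hU k).pdv j).pdv i).pdv l)).mul (((hU l).pdv j).pdv i)).int
  have sumInt : ∀ G : Fin 3 → Fin 3 → Fin 3 → Fin 3 → E3 → ℝ, (∀ i j k l, Integrable (G i j k l)) →
      Integrable (fun x => ∑ i, ∑ j, ∑ k, ∑ l, G i j k l x) ∧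
      ∑ i, ∑ j, ∑ k, ∑ l, ∫ x, G i j k l x = ∫ x, ∑ i, ∑ j, ∑ k, ∑ l, G i j k l x := by
    intro G hG
    have i1 : ∀ i j k, Integrable (fun x => ∑ l, G i j k l x) := fun i j k =>
      integrable_finsetSum _ fun l _ => hG i j k l
    have i2 : ∀ i j, Integrable (fun x => ∑ k, ∑ l, G i j k l x) := fun i j =>
      integrable_finsetSum _ fun k _ => i1 i j k
    have i3 : ∀ i, Integrable (fun x => ∑ j, ∑ k, ∑ l, G i j k l x) := fun i =>
      integrable_finsetSum _ fun j _ => i2 i j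
    refine ⟨integrable_finsetSum _ fun i _ => i3 i, ?_⟩
    rw [integral_finsetSum _ fun i _ => i3 i]
    refine Finset.sum_congr rfl fun i _ => ?_
    rw [integral_finsetSum _ fun j _ => i2 i j]
    refine Finset.sum_congr rfl fun j _ => ?_
    rw [integral_finsetSum _ fun k _ => i1 i j k]
    refine Finset.sum_congr rfl fun k _ => ?_
    rw [integral_finsetSum _ fun l _ => hG i j k l]
  obtain ⟨jA, eA⟩ := sumInt _ iA
  obtain ⟨jB, eB⟩ := sumInt _ iB
  rw [eA, eB]
  rw [neg_mul_neg, sub_neg_eq_add, ← integral_const_mul, ← integral_add (jA.const_mul 2) jB]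
  have hint : Integrable (fun x => ‖‖u x‖ * grad2Norm u x * grad3Norm u x‖) :=
    (((hnc.mul g2c).mul g3c).integrable_of_hasCompactSupport
      (hns.mul_right.mul_right)).norm
  calc _ ≤ ∫ x, 5 * ‖‖u x‖ * grad2Norm u x * grad3Norm u x‖ := by
        rw [← Real.norm_eq_abs]
        refine norm_integral_le_of_norm_le (hint.const_mul 5) (Filter.Eventually.of_forall fun x => ?_)
        have h := pt (fun l => U l x) (fun i j k => pdv i (pdv j (U k)) x)
          (fun i j l k => pdv i (pdv j (pdv l (U k))) x)
        refine h.trans (mul_le_mul_of_nonneg_left (le_trans (le_of_eq ?_) (le_abs_self _)) (by norm_num))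
        simp only [grad2Norm, grad3Norm, c2, c3, EuclideanSpace.norm_eq, Real.norm_eq_abs, sq_abs, hUdef]
    _ ≤ _ := by
        rw [integral_const_mul]
        nlinarith [hH]
end

section
/- (Logarithmic Gronwall lemma) Let y : [0,T] → [0,∞) be a C¹ (or absolutely continuous) function and f : [0,T] → [0,∞) an integrable function such that y'(t) ≤ f(t) · (1 + ln(e + y(t))) · y(t) for a.e. t ∈ [0,T]. Then for all t ∈ [0,T]: 1 + ln(e + y(t)) ≤ (1 + ln(e + y(0))) · exp( ∫₀ᵗ f(τ) dτ ). In particular, if ∫₀ᵀ f(τ) dτ < ∞ then y is bounded on [0,T]. -/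
open MeasureTheory Real

/-- **Logarithmic Gronwall lemma.**
If `y : [0,T] → [0,∞)` is differentiable with derivative `y'`, `f : [0,T] → [0,∞)`
is integrable, and `y'(t) ≤ f(t) (1 + ln(e + y(t))) y(t)` on `[0,T]`, then
`1 + ln(e + y(t)) ≤ (1 + ln(e + y(0))) exp(∫₀ᵗ f)` for all `t ∈ [0,T]`;
in particular `y` is bounded on `[0,T]`. -/
theorem log_gronwall
    (T : ℝ) (hT : 0 ≤ T)
    (y y' f : ℝ → ℝ)
    (hy_nonneg : ∀ t ∈ Set.Icc (0 : ℝ) T, 0 ≤ y t)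
    (hf_nonneg : ∀ t ∈ Set.Icc (0 : ℝ) T, 0 ≤ f t)
    (hf_int : IntegrableOn f (Set.Icc 0 T) volume)
    (hy_deriv : ∀ t ∈ Set.Icc (0 : ℝ) T, HasDerivAt y (y' t) t)
    (hy_ineq : ∀ t ∈ Set.Icc (0 : ℝ) T,
      y' t ≤ f t * (1 + Real.log (Real.exp 1 + y t)) * y t) :
    (∀ t ∈ Set.Icc (0 : ℝ) T,
      1 + Real.log (Real.exp 1 + y t)
        ≤ (1 + Real.log (Real.exp 1 + y 0)) * Real.exp (∫ τ in (0 : ℝ)..t, f τ)) ∧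
    ∃ M : ℝ, ∀ t ∈ Set.Icc (0 : ℝ) T, y t ≤ M := by
  have hpos : ∀ t ∈ Set.Icc (0 : ℝ) T, 2 ≤ 1 + Real.log (Real.exp 1 + y t) := by
    intro t ht
    have h1 := hy_nonneg t ht
    have h2 : Real.log (Real.exp 1) ≤ Real.log (Real.exp 1 + y t) :=
      Real.log_le_log (Real.exp_pos 1) (by linarith)
    rw [Real.log_exp] at h2
    linarith
  have hg : ∀ t ∈ Set.Icc (0 : ℝ) T,
      HasDerivAt (fun s => Real.log (1 + Real.log (Real.exp 1 + y s)))
        (y' t / (Real.exp 1 + y t) / (1 + Real.log (Real.exp 1 + y t))) t := by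
    intro t ht
    have h1 := hy_nonneg t ht
    have h2 := hpos t ht
    have h3 := Real.exp_pos 1
    exact ((((hy_deriv t ht).const_add (Real.exp 1)).log (by linarith)).const_add 1).log
      (by linarith)
  have hle : ∀ t ∈ Set.Icc (0 : ℝ) T,
      y' t / (Real.exp 1 + y t) / (1 + Real.log (Real.exp 1 + y t)) ≤ f t := by
    intro t ht
    have h1 := hy_nonneg t ht
    have h2 := hpos t ht
    have h3 := Real.exp_pos 1
    have h4 := hf_nonneg t ht
    rw [div_div, div_le_iff₀ (by apply mul_pos <;> linarith)]
    refine (hy_ineq t ht).trans ?_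
    have h5 : 0 ≤ f t * (1 + Real.log (Real.exp 1 + y t)) * Real.exp 1 :=
      mul_nonneg (mul_nonneg h4 (by linarith)) h3.le
    nlinarith
  constructor
  · intro t ht
    have hsub : Set.Icc 0 t ⊆ Set.Icc 0 T := Set.Icc_subset_Icc_right ht.2
    have key := intervalIntegral.sub_le_integral_of_hasDeriv_right_of_le ht.1
      (fun s hs => (hg s (hsub hs)).continuousAt.continuousWithinAt)
      (fun s hs => (hg s (hsub (Set.Ioo_subset_Icc_self hs))).hasDerivWithinAt)
      (hf_int.mono_set hsub)
      (fun s hs => hle s (hsub (Set.Ioo_subset_Icc_self hs)))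
    have p0 := hpos 0 ⟨le_rfl, hT⟩
    have pt := hpos t ht
    have h6 : Real.log (1 + Real.log (Real.exp 1 + y t)) ≤
        Real.log (1 + Real.log (Real.exp 1 + y 0)) + ∫ τ in (0 : ℝ)..t, f τ := by
      linarith
    have h7 := Real.exp_le_exp.mpr h6
    rwa [Real.exp_add, Real.exp_log (by linarith), Real.exp_log (by linarith)] at h7
  · have hc : ContinuousOn y (Set.Icc 0 T) :=
      fun s hs => (hy_deriv s hs).continuousAt.continuousWithinAt
    obtain ⟨M, hM⟩ := isCompact_Icc.bddAbove_image hc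
    exact ⟨M, fun t ht => hM ⟨t, ht, rfl⟩⟩
end
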